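/- Let m ≥ 1. Define g : {(x,y) ∈ ℝ² : x+y ≠ 0, x ≥ y} → ℝ (extended to x < y by symmetry of the formula) by g(x,y) = sinh((x+y)/2)/sinh(3(x+y)/2) − sinh((x−y)/2)/sinh(3(x−y)/2) when x ≠ y, and g(x,x) = sinh(x)/sinh(3x) − 1/3 when x = y ≠ 0. For real vectors x = (x_1,...,x_m), y = (y_1,...,y_m) with 0 < x_1 < ... < x_m and 0 < y_1 < ... < y_m, set G̃(x,y) = det_m[g(x_j,y_k)] / (∏_{k=1}^m x_k·y_k · ∏_{1≤i<j≤m} (x_j²−x_i²)(y_j²−y_i²)). Then G̃(x,y) tends, as (x,y) → (0,0) within this domain, to the limit L_m = [∏_{1≤i<j≤2m} 3(j−i)] · [∏_{i=1}^{2m+1} ∏_{j=1}^{m} (1+3(2j−i))] / [(2m)! · ∏_{1≤i<j≤m}(j²−i²) · ∏_{m+1≤i<j≤2m}(j²−i²) · ∏_{i=1}^{m}∏_{j=1}^{m} 9(m+j−i)(m+j+i)]. -/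

import Mathlib

open Finset Filter

open scoped Classical in
/-- The kernel `g(x,y) = sinh((x+y)/2)/sinh(3(x+y)/2) − sinh((x−y)/2)/sinh(3(x−y)/2)`
with the continuous extension `g(x,x) = sinh(x)/sinh(3x) − 1/3` on the diagonal. -/
noncomputable def gKer (x y : ℝ) : ℝ :=
  if x = y then Real.sinh x / Real.sinh (3 * x) - 1 / 3
  else Real.sinh ((x + y) / 2) / Real.sinh (3 * (x + y) / 2) -
       Real.sinh ((x - y) / 2) / Real.sinh (3 * (x - y) / 2)


open Polynomial in
/-- The polynomials `c n` with `sinh (a * t) / sinh t = ∑ (c n).eval a * t ^ (2 * n) / (2 * n)!`. -/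
noncomputable def sinhQuotPoly (n : ℕ) : ℝ[X] :=
  C ((2 * n + 1 : ℝ)⁻¹) *
    (X ^ (2 * n + 1) - ∑ k : Fin n, C ((2 * n + 1).choose (2 * k) : ℝ) * sinhQuotPoly k)
termination_by n
decreasing_by exact k.2

open Polynomial in
lemma sum_choose_mul_sinhQuotPoly (n : ℕ) :
    ∑ k ∈ range (n + 1), C ((2 * n + 1).choose (2 * k) : ℝ) * sinhQuotPoly k =
      X ^ (2 * n + 1) := by
  have h : (C ((2 * n + 1 : ℝ)) : ℝ[X]) * C ((2 * n + 1 : ℝ)⁻¹) = 1 := by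
    rw [← C_mul, mul_inv_cancel₀ (by positivity), C_1]
  have hc : (((2 * n + 1).choose (2 * n) : ℕ) : ℝ) = 2 * n + 1 := by
    rw [Nat.choose_symm_of_eq_add (by omega : 2 * n + 1 = 2 * n + 1)]
    simp
  rw [sum_range_succ, hc, sinhQuotPoly, ← mul_assoc, h, one_mul,
    Fin.sum_univ_eq_sum_range (fun k => C ((2 * n + 1).choose (2 * k) : ℝ) * sinhQuotPoly k)]
  ring

lemma sum_choose_mul_eval_sinhQuotPoly (a : ℝ) (n : ℕ) :
    ∑ k ∈ range (n + 1), ((2 * n + 1).choose (2 * k) : ℝ) * (sinhQuotPoly k).eval a =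
      a ^ (2 * n + 1) := by
  simpa [Polynomial.eval_finsetSum] using
    congrArg (Polynomial.eval a) (sum_choose_mul_sinhQuotPoly n)

lemma eq_of_sum_choose_mul_eq {u v : ℕ → ℝ}
    (h : ∀ n, ∑ k ∈ range (n + 1), ((2 * n + 1).choose (2 * k) : ℝ) * u k =
      ∑ k ∈ range (n + 1), ((2 * n + 1).choose (2 * k) : ℝ) * v k) (n : ℕ) : u n = v n := by
  induction n using Nat.strong_induction_on with
  | _ n ih =>
    have hn := h n
    rw [sum_range_succ, sum_range_succ,
      sum_congr rfl fun k hk => by rw [ih k (mem_range.1 hk)]] at hn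
    have hc : (0 : ℝ) < (2 * n + 1).choose (2 * n) := by
      exact_mod_cast Nat.choose_pos (by omega)
    exact mul_left_cancel₀ hc.ne' (add_left_cancel hn)

lemma sum_range_two_mul {M : Type*} [AddCommMonoid M] (f : ℕ → M) (n : ℕ) :
    ∑ k ∈ range (2 * n), f k = ∑ k ∈ range n, (f (2 * k) + f (2 * k + 1)) := by
  induction n with
  | zero => simp
  | succ n ih => rw [mul_add_one, sum_range_succ, sum_range_succ, ih, sum_range_succ, add_assoc]

lemma two_mul_sum_choose_mul_even_pow (b : ℝ) (n : ℕ) :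
    ∑ k ∈ range (n + 1), ((2 * n + 1).choose (2 * k) : ℝ) * (2 * b ^ (2 * k)) =
      (b + 1) ^ (2 * n + 1) - (b - 1) ^ (2 * n + 1) := by
  rw [sub_eq_add_neg b 1, add_pow, add_pow, ← sum_sub_distrib,
    show 2 * n + 1 + 1 = 2 * (n + 1) by ring, sum_range_two_mul]
  refine sum_congr rfl fun k hk => ?_
  have hk : k ≤ n := by simpa [Nat.lt_succ_iff] using hk
  rw [show 2 * n + 1 - 2 * k = 2 * (n - k) + 1 by omega,
    show 2 * n + 1 - (2 * k + 1) = 2 * (n - k) by omega]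
  simp [pow_succ, pow_mul]
  ring

lemma eval_add_two_sinhQuotPoly (a : ℝ) (n : ℕ) :
    (sinhQuotPoly n).eval (a + 2) = (sinhQuotPoly n).eval a + 2 * (a + 1) ^ (2 * n) := by
  refine eq_of_sum_choose_mul_eq (u := fun n => (sinhQuotPoly n).eval (a + 2))
    (v := fun n => (sinhQuotPoly n).eval a + 2 * (a + 1) ^ (2 * n)) (fun n => ?_) n
  simp only [mul_add ((2 * n + 1).choose _ : ℝ), sum_add_distrib,
    sum_choose_mul_eval_sinhQuotPoly, two_mul_sum_choose_mul_even_pow]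
  ring

lemma eval_neg_sinhQuotPoly (a : ℝ) (n : ℕ) :
    (sinhQuotPoly n).eval (-a) = -(sinhQuotPoly n).eval a := by
  refine eq_of_sum_choose_mul_eq (u := fun n => (sinhQuotPoly n).eval (-a))
    (v := fun n => -(sinhQuotPoly n).eval a) (fun n => ?_) n
  simp only [mul_neg, sum_neg_distrib, sum_choose_mul_eval_sinhQuotPoly]
  exact Odd.neg_pow ⟨n, rfl⟩ a

lemma eval_zero_sinhQuotPoly (n : ℕ) : (sinhQuotPoly n).eval 0 = 0 := by
  have := eval_neg_sinhQuotPoly 0 n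
  rw [neg_zero] at this
  linarith

lemma eval_one_sinhQuotPoly {n : ℕ} (hn : n ≠ 0) : (sinhQuotPoly n).eval 1 = 0 := by
  have h := eval_add_two_sinhQuotPoly (-1) n
  rw [eval_neg_sinhQuotPoly] at h
  norm_num [hn] at h
  linarith

lemma eval_natCast_sinhQuotPoly {n : ℕ} (hn : n ≠ 0) (r : ℕ) {e : ℕ} (he : e < 2) :
    (sinhQuotPoly n).eval (2 * r + e : ℝ) =
      ∑ s ∈ range r, 2 * (2 * s + e + 1 : ℝ) ^ (2 * n) := by
  induction r with
  | zero =>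
    interval_cases e
    · simp [eval_zero_sinhQuotPoly]
    · simp [eval_one_sinhQuotPoly hn]
  | succ r ih =>
    rw [sum_range_succ, ← ih, ← eval_add_two_sinhQuotPoly]
    push_cast
    ring_nf

open Polynomial in
lemma sinhQuotPoly_natDegree_le_and_coeff (n : ℕ) :
    (sinhQuotPoly n).natDegree ≤ 2 * n + 1 ∧
      (sinhQuotPoly n).coeff (2 * n + 1) = (2 * n + 1 : ℝ)⁻¹ := by
  induction n using Nat.strong_induction_on with
  | _ n ih =>
    have hdeg : (∑ k : Fin n, C ((2 * n + 1).choose (2 * k) : ℝ) * sinhQuotPoly k).natDegree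
        < 2 * n + 1 := by
      refine Nat.lt_succ_of_le (natDegree_sum_le_of_forall_le _ _ fun k _ => ?_)
      refine (natDegree_C_mul_le _ _).trans ((ih k k.2).1.trans ?_)
      have := k.2
      omega
    rw [sinhQuotPoly]
    constructor
    · refine (natDegree_C_mul_le _ _).trans ((natDegree_sub_le _ _).trans ?_)
      exact max_le (natDegree_X_pow_le _) hdeg.le
    · rw [coeff_C_mul, coeff_sub, coeff_eq_zero_of_natDegree_lt hdeg]
      simp

open Polynomial in
lemma natDegree_prod_le_and_coeff {ι : Type*} (s : Finset ι) (f : ι → ℝ[X]) (d : ι → ℕ)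
    (h : ∀ i ∈ s, (f i).natDegree ≤ d i) :
    (∏ i ∈ s, f i).natDegree ≤ ∑ i ∈ s, d i ∧
      (∏ i ∈ s, f i).coeff (∑ i ∈ s, d i) = ∏ i ∈ s, (f i).coeff (d i) := by
  induction s using Finset.cons_induction with
  | empty => simp
  | cons a s ha ih =>
    obtain ⟨h1, h2⟩ := ih fun i hi => h i (mem_cons_of_mem hi)
    have h3 := h a (mem_cons_self a s)
    simp only [prod_cons, sum_cons]
    exact ⟨natDegree_mul_le_of_le h3 h1, by rw [coeff_mul_add_eq_of_natDegree_le h3 h1, h2]⟩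

open Polynomial in
lemma natDegree_det_le_and_coeff {m : ℕ} (M : Matrix (Fin m) (Fin m) ℝ[X]) (d e : Fin m → ℕ)
    (h : ∀ i j, (M i j).natDegree ≤ d i + e j) :
    M.det.natDegree ≤ ∑ i, (d i + e i) ∧
      M.det.coeff (∑ i, (d i + e i)) =
        (Matrix.of fun i j => (M i j).coeff (d i + e j)).det := by
  have key (σ : Equiv.Perm (Fin m)) :
      ∑ i, (d (σ i) + e i) = ∑ i, (d i + e i) := by
    rw [sum_add_distrib, sum_add_distrib, Equiv.sum_comp σ d]
  have hp (σ : Equiv.Perm (Fin m)) := natDegree_prod_le_and_coeff univ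
    (fun i => M (σ i) i) (fun i => d (σ i) + e i) fun i _ => h _ _
  simp only [key] at hp
  rw [Matrix.det_apply, Matrix.det_apply]
  constructor
  · exact natDegree_sum_le_of_forall_le _ _ fun σ _ => (natDegree_smul_le _ _).trans (hp σ).1
  · rw [finsetSum_coeff]
    refine sum_congr rfl fun σ _ => ?_
    rw [coeff_smul, (hp σ).2]
    simp

open Polynomial in
lemma pow_dvd_det_of_rank_eval_le {m r : ℕ} (M : Matrix (Fin m) (Fin m) ℝ[X]) (a : ℝ)
    (h : (M.map (eval a)).rank ≤ r) : (X - C a) ^ (m - r) ∣ M.det := by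
  obtain ⟨L, L', D, hD⟩ :=
    Matrix.Pivot.exists_list_transvec_mul_mul_list_transvec_eq_diagonal (M.map (eval a))
  set P := (L.map Matrix.TransvectionStruct.toMatrix).prod with hP
  set Q := (L'.map Matrix.TransvectionStruct.toMatrix).prod with hQ
  have hPd : P.det = 1 := Matrix.TransvectionStruct.det_toMatrix_prod L
  have hQd : Q.det = 1 := Matrix.TransvectionStruct.det_toMatrix_prod L'
  set N : Matrix (Fin m) (Fin m) ℝ[X] := P.map C * M * Q.map C with hN
  have hNd : N.det = M.det := by
    have hmap (A : Matrix (Fin m) (Fin m) ℝ) : (A.map C).det = C A.det :=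
      (RingHom.map_det C A).symm
    rw [hN, Matrix.det_mul, Matrix.det_mul, hmap, hmap, hPd, hQd]
    simp
  have hNe : N.map (eval a) = Matrix.diagonal D := by
    have hc (A : Matrix (Fin m) (Fin m) ℝ) : (A.map C).map (evalRingHom a) = A := by
      ext; simp
    rw [← hD]
    change N.map (evalRingHom a) = P * M.map (evalRingHom a) * Q
    rw [hN, Matrix.map_mul, Matrix.map_mul, hc, hc]
  have hrank : m - r ≤ #{i | D i = 0} := by
    have h1 : (Matrix.diagonal D).rank ≤ r := by
      rw [← hD, Matrix.rank_mul_eq_left_of_isUnit_det _ _ (by simp [hQd]),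
        Matrix.rank_mul_eq_right_of_isUnit_det _ _ (by simp [hPd])]
      exact h
    rw [Matrix.rank_diagonal, Fintype.card_subtype] at h1
    have h2 := card_filter_add_card_filter_not (s := (univ : Finset (Fin m))) (fun i => D i = 0)
    simp only [card_univ, Fintype.card_fin] at h2
    simp only [ne_eq] at h1
    omega
  have hdvd (i j : Fin m) : (if D i = 0 then X - C a else 1) ∣ N i j := by
    split_ifs with hi
    · rw [dvd_iff_isRoot, IsRoot.def]
      have := congrFun (congrFun hNe i) j
      simp only [Matrix.map_apply] at this
      rw [this, Matrix.diagonal_apply]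
      split_ifs <;> simp [hi]
    · exact one_dvd _
  choose N' hN' using hdvd
  have hfac : N.det = (X - C a) ^ #{i | D i = 0} * (Matrix.of N').det := by
    have : N = Matrix.of fun i j => (if D i = 0 then X - C a else 1) * Matrix.of N' i j := by
      ext1 i j; simp [hN']
    rw [this, Matrix.det_mul_column, prod_ite]
    simp
  rw [← hNd, hfac]
  exact (pow_dvd_pow _ hrank).mul_right _

open Polynomial in
/-- The Hankel matrix of the polynomials `sinhQuotPoly`, started at index one. -/
noncomputable def sinhQuotHankel (m : ℕ) : Matrix (Fin m) (Fin m) ℝ[X] :=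
  Matrix.of fun i j => sinhQuotPoly (i + j + 1)

open Polynomial in
lemma rank_eval_sinhQuotHankel_le (m : ℕ) (k : ℤ) :
    ((sinhQuotHankel m).map (eval (k : ℝ))).rank ≤ k.natAbs / 2 := by
  have hnat (k : ℕ) : ((sinhQuotHankel m).map (eval (k : ℝ))).rank ≤ k / 2 := by
    have hfac : (sinhQuotHankel m).map (eval (k : ℝ)) =
        (Matrix.of fun (i : Fin m) (s : Fin (k / 2)) =>
            2 * (2 * (s : ℕ) + (k % 2 : ℕ) + 1 : ℝ) ^ (2 * (i : ℕ) + 1)) *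
          Matrix.of fun (s : Fin (k / 2)) (j : Fin m) =>
            (2 * (s : ℕ) + (k % 2 : ℕ) + 1 : ℝ) ^ (2 * (j : ℕ) + 1) := by
      ext i j
      have hk : (k : ℝ) = 2 * (k / 2 : ℕ) + (k % 2 : ℕ) := by
        exact_mod_cast (Nat.div_add_mod k 2).symm
      rw [Matrix.map_apply, sinhQuotHankel, Matrix.of_apply, hk,
        eval_natCast_sinhQuotPoly (Nat.succ_ne_zero _) _ (Nat.mod_lt _ two_pos),
        Matrix.mul_apply, ← Fin.sum_univ_eq_sum_range
          (fun s => 2 * (2 * (s : ℝ) + (k % 2 : ℕ) + 1) ^ (2 * ((i : ℕ) + j + 1)))]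
      refine sum_congr rfl fun s _ => ?_
      simp only [Matrix.of_apply]
      ring
    rw [hfac]
    refine (Matrix.rank_mul_le_left _ _).trans ((Matrix.rank_le_card_width _).trans ?_)
    simp
  obtain hk | hk := Int.natAbs_eq k
  · have hk' : (k : ℝ) = (k.natAbs : ℝ) := by rw [← Int.cast_natCast k.natAbs, ← hk]
    rw [hk']
    exact hnat _
  · have h : (sinhQuotHankel m).map (eval (k : ℝ)) =
        (-1 : Matrix (Fin m) (Fin m) ℝ) * (sinhQuotHankel m).map (eval (k.natAbs : ℝ)) := by
      have hk' : (k : ℝ) = -(k.natAbs : ℝ) := by exact_mod_cast hk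
      ext i j
      rw [neg_mul, one_mul, Matrix.neg_apply, Matrix.map_apply, Matrix.map_apply, sinhQuotHankel,
        Matrix.of_apply, hk', eval_neg_sinhQuotPoly]
    rw [h]
    exact (Matrix.rank_mul_le_right _ _).trans (hnat _)

lemma card_sub_two_mul_eq_le (m : ℕ) (k : ℤ) :
    #{p ∈ Icc 1 (2 * m + 1) ×ˢ Icc 1 m | k = (p.1 : ℤ) - 2 * p.2} ≤ m - k.natAbs / 2 := by
  have hinj (s : Finset ℕ)
      (hs : ∀ p ∈ ({p ∈ Icc 1 (2 * m + 1) ×ˢ Icc 1 m | k = (p.1 : ℤ) - 2 * p.2} :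
        Finset (ℕ × ℕ)), p.2 ∈ s) :
      #{p ∈ Icc 1 (2 * m + 1) ×ˢ Icc 1 m | k = (p.1 : ℤ) - 2 * p.2} ≤ #s := by
    refine card_le_card_of_injOn Prod.snd hs fun p hp q hq hpq => ?_
    simp only [coe_filter, Set.mem_ofPred_eq] at hp hq
    ext
    · omega
    · exact hpq
  obtain hk | hk := le_total 0 k
  · refine (hinj (Icc 1 (m - k.natAbs / 2)) fun p hp => ?_).trans (by simp)
    simp only [mem_filter, mem_product, mem_Icc] at hp ⊢
    omega
  · refine (hinj (Icc (k.natAbs / 2 + 1) m) fun p hp => ?_).trans (by simp)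
    simp only [mem_filter, mem_product, mem_Icc] at hp ⊢
    omega

open Polynomial in
lemma prod_dvd_det_sinhQuotHankel (m : ℕ) :
    ∏ p ∈ Icc 1 (2 * m + 1) ×ˢ Icc 1 m, (X - C ((p.1 : ℝ) - 2 * p.2)) ∣
      (sinhQuotHankel m).det := by
  obtain h0 | h0 := eq_or_ne (sinhQuotHankel m).det 0
  · simp [h0]
  have h := (Multiset.prod_X_sub_C_dvd_iff_le_roots h0
    ((Icc 1 (2 * m + 1) ×ˢ Icc 1 m).val.map fun p : ℕ × ℕ => (p.1 : ℝ) - 2 * p.2)).2 ?_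
  · rwa [Multiset.map_map] at h
  refine Multiset.le_iff_count.2 fun a => ?_
  rw [count_roots, Multiset.count_map]
  change #{p ∈ Icc 1 (2 * m + 1) ×ˢ Icc 1 m | a = (p.1 : ℝ) - 2 * p.2} ≤ _
  obtain he | ⟨p, hp⟩ := Finset.eq_empty_or_nonempty
    {p ∈ Icc 1 (2 * m + 1) ×ˢ Icc 1 m | a = (p.1 : ℝ) - 2 * p.2}
  · simp [he]
  obtain ⟨k, rfl⟩ : ∃ k : ℤ, a = k := ⟨p.1 - 2 * p.2, by simpa using (mem_filter.1 hp).2⟩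
  have hcast (p : ℕ × ℕ) : (k : ℝ) = p.1 - 2 * p.2 ↔ k = (p.1 : ℤ) - 2 * p.2 := by
    exact_mod_cast Iff.rfl
  simp only [hcast]
  exact (card_sub_two_mul_eq_le m k).trans ((le_rootMultiplicity_iff h0).2
    (pow_dvd_det_of_rank_eval_le _ _ (rank_eval_sinhQuotHankel_le m k)))

open Polynomial in
lemma eval_det_sinhQuotHankel (m : ℕ) (a : ℝ) :
    (sinhQuotHankel m).det.eval a =
      (Matrix.of fun i j : Fin m => (2 * (i : ℝ) + 2 * j + 3)⁻¹).det *
        ∏ i ∈ Icc 1 (2 * m + 1), ∏ j ∈ Icc 1 m, (a + (2 * (j : ℝ) - i)) := by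
  obtain ⟨hdeg, hcoeff⟩ := natDegree_det_le_and_coeff (sinhQuotHankel m)
    (fun i => 2 * i + 1) (fun j => 2 * j + 2) fun i j =>
      (sinhQuotPoly_natDegree_le_and_coeff _).1.trans (by omega)
  have hsum : ∑ i : Fin m, (2 * (i : ℕ) + 1 + (2 * i + 2)) = (2 * m + 1) * m := by
    rw [Fin.sum_univ_eq_sum_range (fun i => 2 * i + 1 + (2 * i + 2))]
    clear hdeg hcoeff
    induction m with
    | zero => simp
    | succ m ih =>
      rw [sum_range_succ, ih]
      ring
  rw [hsum] at hdeg hcoeff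
  set P : ℝ[X] := ∏ p ∈ Icc 1 (2 * m + 1) ×ˢ Icc 1 m, (X - C ((p.1 : ℝ) - 2 * p.2)) with hP
  have hPm : P.Monic := monic_prod_of_monic _ _ fun p _ => monic_X_sub_C _
  have hPd : P.natDegree = (2 * m + 1) * m := by
    rw [hP, natDegree_prod_of_monic _ _ fun p _ => monic_X_sub_C _]
    simp only [natDegree_X_sub_C, sum_const, card_product, Nat.card_Icc, smul_eq_mul]
    simp
  obtain ⟨q, hq⟩ := prod_dvd_det_sinhQuotHankel m
  rw [← hP] at hq
  have hq0 : q = C (q.coeff 0) := by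
    refine eq_C_of_natDegree_le_zero ?_
    obtain rfl | hq' := eq_or_ne q 0
    · simp
    rw [hq, hPm.natDegree_mul' hq', hPd] at hdeg
    omega
  have hqc : q.coeff 0 = (Matrix.of fun i j : Fin m => (2 * (i : ℝ) + 2 * j + 3)⁻¹).det := by
    rw [hq, hq0, coeff_mul_C, ← hPd, hPm.coeff_natDegree, one_mul] at hcoeff
    rw [hcoeff]
    congr 1
    ext i j
    have := (sinhQuotPoly_natDegree_le_and_coeff ((i : ℕ) + j + 1)).2
    simp only [sinhQuotHankel, Matrix.of_apply]
    rw [show 2 * (i : ℕ) + 1 + (2 * j + 2) = 2 * (i + j + 1) + 1 by ring, this]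
    push_cast
    ring_nf
  rw [hq, hq0, eval_mul, eval_C, hqc, mul_comm, hP, eval_prod, prod_product]
  simp only [eval_sub, eval_X, eval_C]
  refine congrArg _ (prod_congr rfl fun i _ => prod_congr rfl fun j _ => ?_)
  ring

/-- The Cauchy determinant: reduction of the size by one. -/
lemma det_cauchy_succ {m : ℕ} (x y : Fin (m + 1) → ℝ) (h : ∀ i j, x i + y j ≠ 0) :
    (Matrix.of fun i j => (x i + y j)⁻¹).det =
      (x (Fin.last m) + y (Fin.last m))⁻¹ *
        (∏ i : Fin m, (x i.castSucc - x (Fin.last m)) / (x i.castSucc + y (Fin.last m))) *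
        (∏ j : Fin m, (y j.castSucc - y (Fin.last m)) / (x (Fin.last m) + y j.castSucc)) *
        (Matrix.of fun i j : Fin m => (x i.castSucc + y j.castSucc)⁻¹).det := by
  set l := Fin.last m with hl
  set A : Matrix (Fin (m + 1)) (Fin (m + 1)) ℝ := Matrix.of fun i j => (x i + y j)⁻¹ with hA
  set c : Fin (m + 1) → ℝ := fun i => if i = l then 0 else (x l + y l) / (x i + y l) with hc
  set B : Matrix (Fin (m + 1)) (Fin (m + 1)) ℝ := Matrix.of fun i j => A i j - c i * A l j with hB
  have hAB : A.det = B.det := by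
    refine Matrix.det_eq_of_forall_row_eq_smul_add_const c l (by simp [hc]) fun i j => ?_
    simp [hB, hc]
  have hBl (i : Fin m) : B i.castSucc l = 0 := by
    have h1 := h i.castSucc l
    have h2 := h l l
    have h3 : i.castSucc ≠ l := (Fin.castSucc_lt_last i).ne
    simp only [hB, hc, hA, Matrix.of_apply, h3, if_false]
    field_simp
    ring
  have hBll : B l l = (x l + y l)⁻¹ := by simp [hB, hc, hA]
  rw [hAB, Matrix.det_succ_column B l, Fin.sum_univ_castSucc]
  simp only [hBl, mul_zero, zero_mul, sum_const_zero, zero_add]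
  rw [← hl, hBll, hl, Fin.succAbove_last, ← hl]
  have hsub : B.submatrix Fin.castSucc Fin.castSucc = Matrix.of fun i j : Fin m =>
      ((x i.castSucc - x l) / (x i.castSucc + y l)) *
        (Matrix.of fun i j : Fin m => ((y j.castSucc - y l) / (x l + y j.castSucc)) *
          (Matrix.of fun i j : Fin m => (x i.castSucc + y j.castSucc)⁻¹) i j) i j := by
    ext i j
    have h1 := h i.castSucc l
    have h2 := h l l
    have h3 : i.castSucc ≠ l := (Fin.castSucc_lt_last i).ne
    have h4 := h i.castSucc j.castSucc
    have h5 := h l j.castSucc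
    simp only [hB, hc, hA, Matrix.of_apply, h3, if_false, Matrix.submatrix_apply]
    field_simp
    ring
  rw [hsub, Matrix.det_mul_column, Matrix.det_mul_row, Even.neg_one_pow ⟨_, rfl⟩]
  ring

lemma prod_Ico_add_mul_factorial (a n : ℕ) :
    (∏ i ∈ Ico 1 (n + 1), ((a : ℝ) + i)) * a.factorial = (a + n).factorial := by
  induction n with
  | zero => simp
  | succ n ih =>
    rw [prod_Ico_succ_top (by omega), mul_right_comm, ih, ← add_assoc, Nat.factorial_succ]
    push_cast
    ring

lemma prod_range_odd_mul_factorial (m n : ℕ) :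
    (∏ i ∈ range n, (2 * (i : ℝ) + 2 * m + 3)) * 2 ^ n * (m + n).factorial *
      (2 * m + 1).factorial = (2 * m + 2 * n + 1).factorial * m.factorial := by
  induction n with
  | zero => simp; ring
  | succ n ih =>
    have h : (((2 * m + 2 * (n + 1) + 1).factorial : ℕ) : ℝ) =
        (2 * n + 2 * m + 3) * (2 * (m + n + 1)) * (2 * m + 2 * n + 1).factorial := by
      rw [show 2 * m + 2 * (n + 1) + 1 = 2 * m + 2 * n + 1 + 1 + 1 by ring, Nat.factorial_succ,
        Nat.factorial_succ]
      push_cast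
      ring
    rw [h, mul_assoc _ _ (m.factorial : ℝ), ← ih, prod_range_succ, ← add_assoc m,
      Nat.factorial_succ]
    push_cast
    ring

lemma prod_range_two_mul_sub (m : ℕ) :
    ∏ i ∈ range m, (2 * ((m : ℝ) - i)) = 2 ^ m * m.factorial := by
  rw [prod_mul_distrib, prod_const, card_range, ← prod_range_reflect,
    ← prod_range_add_one_eq_factorial]
  push_cast
  refine congrArg _ (prod_congr rfl fun i hi => ?_)
  have hi := mem_range.1 hi
  rw [Nat.sub_sub, Nat.cast_sub (by omega)]
  push_cast
  ring

lemma det_odd_hilbert_succ (m : ℕ) :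
    (Matrix.of fun i j : Fin (m + 1) => (2 * (i : ℝ) + 2 * j + 3)⁻¹).det =
      (4 * (m : ℝ) + 3)⁻¹ * ((2 ^ m * m.factorial) /
        ∏ i ∈ range m, (2 * (i : ℝ) + 2 * m + 3)) ^ 2 *
        (Matrix.of fun i j : Fin m => (2 * (i : ℝ) + 2 * j + 3)⁻¹).det := by
  have h := det_cauchy_succ (m := m) (fun i => 2 * (i : ℝ) + 1) (fun j => 2 * (j : ℝ) + 2)
    fun i j => by positivity
  have e (n : ℕ) : (Matrix.of fun i j : Fin n => (2 * (i : ℝ) + 2 * j + 3)⁻¹) =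
      Matrix.of fun i j : Fin n => (2 * (i : ℝ) + 1 + (2 * (j : ℝ) + 2))⁻¹ := by
    ext i j
    simp only [Matrix.of_apply]
    ring_nf
  rw [e, e, h]
  simp only [Fin.val_last, Fin.val_castSucc]
  rw [mul_assoc (_⁻¹) _ (∏ j : Fin m, _), ← prod_mul_distrib,
    Fin.prod_univ_eq_prod_range (fun i => (2 * (i : ℝ) + 1 - (2 * m + 1)) /
      (2 * i + 1 + (2 * m + 2)) * ((2 * i + 2 - (2 * m + 2)) / (2 * m + 1 + (2 * i + 2)))),
    ← prod_range_two_mul_sub, ← prod_div_distrib, ← prod_pow]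
  congr 2
  · ring_nf
  · refine prod_congr rfl fun i _ => ?_
    rw [show (2 * (i : ℝ) + 1 + (2 * m + 2)) = 2 * i + 2 * m + 3 by ring,
      show (2 * (m : ℝ) + 1 + (2 * i + 2)) = 2 * i + 2 * m + 3 by ring]
    ring

lemma det_odd_hilbert (m : ℕ) :
    (Matrix.of fun i j : Fin m => (2 * (i : ℝ) + 2 * j + 3)⁻¹).det * 2 ^ m *
        (2 * m).factorial * (∏ j ∈ Icc 1 (2 * m), ∏ i ∈ Ico 1 j, ((j : ℝ) + i)) =
      4 ^ m ^ 2 * (∏ i ∈ range m, ((2 * i + 1).factorial : ℝ)) ^ 2 := by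
  induction m with
  | zero => simp
  | succ m ih =>
    have hR1 := prod_Ico_add_mul_factorial (2 * m + 1) (2 * m)
    have hR2 := prod_Ico_add_mul_factorial (2 * m + 2) (2 * m + 1)
    have hq := prod_range_odd_mul_factorial m m
    have hq0 : (∏ i ∈ range m, (2 * (i : ℝ) + 2 * m + 3)) ≠ 0 :=
      prod_ne_zero_iff.2 fun i _ => by positivity
    rw [det_odd_hilbert_succ, mul_add_one 2 m, prod_Icc_succ_top (by omega),
      prod_Icc_succ_top (by omega), prod_range_succ, mul_pow _ ((2 * m + 1).factorial : ℝ),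
      show (m + 1) ^ 2 = m ^ 2 + (2 * m + 1) by ring, pow_add 4,
      mul_mul_mul_comm (4 ^ m ^ 2 : ℝ), mul_right_comm, ← ih]
    set q := ∏ i ∈ range m, (2 * (i : ℝ) + 2 * m + 3)
    set R1 := ∏ i ∈ Ico 1 (2 * m + 1), (((2 * m + 1 : ℕ) : ℝ) + i)
    set R2 := ∏ i ∈ Ico 1 (2 * m + 1 + 1), (((2 * m + 2 : ℕ) : ℝ) + i)
    have hf1 : ((2 * m + 1).factorial : ℝ) = (2 * m + 1) * (2 * m).factorial := by
      rw [Nat.factorial_succ]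
      push_cast
      ring
    have hf2 : ((2 * m + 2).factorial : ℝ) = (2 * m + 2) * (2 * m + 1).factorial := by
      rw [Nat.factorial_succ]
      push_cast
      ring
    have hf3 : ((2 * m + 2 + (2 * m + 1)).factorial : ℝ) =
        (4 * m + 3) * (4 * m + 2) * (2 * m + 1 + 2 * m).factorial := by
      rw [show 2 * m + 2 + (2 * m + 1) = 2 * m + 1 + 2 * m + 1 + 1 by ring, Nat.factorial_succ,
        Nat.factorial_succ]
      push_cast
      ring
    rw [← two_mul, show 2 * m + 2 * m + 1 = 2 * m + 1 + 2 * m by ring] at hq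
    have hf : ((2 * m).factorial : ℝ) ≠ 0 := by positivity
    have hm : (m.factorial : ℝ) ≠ 0 := by positivity
    have hF : ((2 * m + 1 + 2 * m).factorial : ℝ) ≠ 0 := by positivity
    have h4 : (4 : ℝ) ^ (2 * m + 1) = 4 * (2 ^ m) ^ 4 := by
      rw [← pow_mul, pow_succ, pow_mul, show m * 4 = 4 * m by ring, pow_mul]
      norm_num
      ring
    rw [hf2, hf1, hf3] at hR2
    rw [hf1] at hR1 hq
    rw [hf2, hf1]
    set f := ((2 * m).factorial : ℝ)
    set F := ((2 * m + 1 + 2 * m).factorial : ℝ)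
    set g := (m.factorial : ℝ)
    have hR1' : R1 = F / ((2 * m + 1) * f) := by
      rw [eq_div_iff (by positivity), hR1]
    have hR2' : R2 = (4 * m + 3) * (4 * m + 2) * F / ((2 * m + 2) * ((2 * m + 1) * f)) := by
      rw [eq_div_iff (by positivity), hR2]
    have hq' : q = F * g / (2 ^ m * f * ((2 * m + 1) * f)) := by
      rw [eq_div_iff (by positivity), ← hq]
      ring
    rw [hR1', hR2', hq', h4]
    field_simp
    ring

lemma prod_Icc_prod_Ico_split (m : ℕ) (F : ℕ → ℕ → ℝ) :
    ∏ j ∈ Icc 1 (2 * m), ∏ i ∈ Ico 1 j, F i j =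
      (∏ j ∈ Icc 1 m, ∏ i ∈ Ico 1 j, F i j) *
        (∏ j ∈ Icc (m + 1) (2 * m), ∏ i ∈ Ico (m + 1) j, F i j) *
        ∏ i ∈ Icc 1 m, ∏ j ∈ Icc 1 m, F i (m + j) := by
  have hout : ∏ j ∈ Icc 1 (2 * m), ∏ i ∈ Ico 1 j, F i j =
      (∏ j ∈ Icc 1 m, ∏ i ∈ Ico 1 j, F i j) *
        ∏ j ∈ Icc (m + 1) (2 * m), ∏ i ∈ Ico 1 j, F i j := by
    rw [← Ico_add_one_right_eq_Icc, ← Ico_add_one_right_eq_Icc, ← Ico_add_one_right_eq_Icc,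
      prod_Ico_consecutive _ (by omega) (by omega)]
  have hin : ∏ j ∈ Icc (m + 1) (2 * m), ∏ i ∈ Ico 1 j, F i j =
      ∏ j ∈ Icc (m + 1) (2 * m), (∏ i ∈ Ico 1 (m + 1), F i j) * ∏ i ∈ Ico (m + 1) j, F i j :=
    prod_congr rfl fun j hj => by
      rw [prod_Ico_consecutive _ (by omega) (by have := (mem_Icc.1 hj).1; omega)]
  have hshift : ∏ j ∈ Icc (m + 1) (2 * m), ∏ i ∈ Ico 1 (m + 1), F i j =
      ∏ i ∈ Icc 1 m, ∏ j ∈ Icc 1 m, F i (m + j) := by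
    rw [Finset.prod_comm, Ico_add_one_right_eq_Icc]
    refine prod_congr rfl fun i _ => ?_
    rw [← Ico_add_one_right_eq_Icc, ← Ico_add_one_right_eq_Icc, prod_Ico_add (fun j => F i j)]
    congr 2 <;> ring
  rw [hout, hin, prod_mul_distrib, hshift]
  ring

lemma prod_three_mul_sub_mul_prod_add (m : ℕ) :
    (∏ j ∈ Icc 1 (2 * m), ∏ i ∈ Ico 1 j, 3 * ((j : ℝ) - (i : ℝ))) *
        (∏ j ∈ Icc 1 (2 * m), ∏ i ∈ Ico 1 j, ((j : ℝ) + i)) * 3 ^ m =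
      9 ^ m ^ 2 * ∏ j ∈ Icc 1 (2 * m), ∏ i ∈ Ico 1 j, ((j : ℝ) ^ 2 - (i : ℝ) ^ 2) := by
  have h3 : (∏ j ∈ Icc 1 (2 * m), ∏ _i ∈ Ico 1 j, (3 : ℝ)) * 3 ^ m = 9 ^ m ^ 2 := by
    induction m with
    | zero => simp
    | succ m ih =>
      rw [mul_add_one, prod_Icc_succ_top (by omega), prod_Icc_succ_top (by omega),
        show (m + 1) ^ 2 = m ^ 2 + (2 * m + 1) by ring, pow_add 9, ← ih, prod_const, prod_const,
        Nat.card_Ico, Nat.card_Ico, show (9 : ℝ) = 3 ^ 2 by norm_num, ← pow_mul]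
      simp only [Nat.add_sub_cancel]
      ring_nf
  rw [← h3, ← prod_mul_distrib, mul_right_comm _ ((3 : ℝ) ^ m), ← prod_mul_distrib]
  congr 1
  refine prod_congr rfl fun j _ => ?_
  rw [← prod_mul_distrib, ← prod_mul_distrib]
  exact prod_congr rfl fun i _ => by ring

/-- Taylor coefficients of `gKer x y / (x * y)` in the variables `x ^ 2` and `y ^ 2`. -/
noncomputable def gCoeff (i j : ℕ) : ℝ :=
  2 * (3 / 2) ^ (2 * (i + j + 1)) * (sinhQuotPoly (i + j + 1)).eval (1 / 3) /
    ((2 * i + 1).factorial * (2 * j + 1).factorial)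

lemma det_gCoeff_eq_mul_det_sinhQuotHankel (m : ℕ) :
    (Matrix.of fun i j : Fin m => gCoeff i j).det =
      2 ^ m * (9 / 4) ^ m ^ 2 / (∏ i ∈ range m, ((2 * i + 1).factorial : ℝ)) ^ 2 *
        (sinhQuotHankel m).det.eval (1 / 3) := by
  have hmat : (Matrix.of fun i j : Fin m => gCoeff i j) = Matrix.of fun i j : Fin m =>
      (2 * (3 / 2 : ℝ) ^ (2 * (i : ℕ) + 1) / (2 * (i : ℕ) + 1).factorial) *
        (Matrix.of fun i j : Fin m =>
          ((3 / 2 : ℝ) ^ (2 * (j : ℕ) + 1) / (2 * (j : ℕ) + 1).factorial) *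
            (sinhQuotHankel m).map (Polynomial.eval (1 / 3)) i j) i j := by
    ext i j
    simp only [gCoeff, sinhQuotHankel, Matrix.of_apply, Matrix.map_apply]
    ring
  have hpow : ∏ i ∈ range m, (3 / 2 : ℝ) ^ (2 * i + 1) = (3 / 2) ^ m ^ 2 := by
    rw [prod_pow_eq_pow_sum]
    congr 1
    clear hmat
    induction m with
    | zero => simp
    | succ m ih =>
      rw [sum_range_succ, ih]
      ring
  have hdet : ((sinhQuotHankel m).map (Polynomial.eval (1 / 3))).det =
      (sinhQuotHankel m).det.eval (1 / 3) :=
    (RingHom.map_det (Polynomial.evalRingHom (1 / 3 : ℝ)) (sinhQuotHankel m)).symm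
  rw [hmat, Matrix.det_mul_column, Matrix.det_mul_row, hdet,
    Fin.prod_univ_eq_prod_range
      (fun i => 2 * (3 / 2 : ℝ) ^ (2 * i + 1) / (2 * i + 1).factorial),
    Fin.prod_univ_eq_prod_range (fun i => (3 / 2 : ℝ) ^ (2 * i + 1) / (2 * i + 1).factorial),
    prod_div_distrib, prod_div_distrib, prod_mul_distrib, hpow, prod_const, card_range,
    show (9 / 4 : ℝ) = (3 / 2) * (3 / 2) by norm_num, mul_pow]
  ring

lemma det_gCoeff (m : ℕ) :
    (Matrix.of fun i j : Fin m => gCoeff i j).det =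
      (∏ j ∈ Icc 1 (2 * m), ∏ i ∈ Ico 1 j, 3 * ((j : ℝ) - (i : ℝ))) *
         (∏ i ∈ Icc 1 (2 * m + 1), ∏ j ∈ Icc 1 m, (1 + 3 * (2 * (j : ℝ) - (i : ℝ)))) /
         (((2 * m).factorial : ℝ) *
          (∏ j ∈ Icc 1 m, ∏ i ∈ Ico 1 j, ((j : ℝ) ^ 2 - (i : ℝ) ^ 2)) *
          (∏ j ∈ Icc (m + 1) (2 * m), ∏ i ∈ Ico (m + 1) j, ((j : ℝ) ^ 2 - (i : ℝ) ^ 2)) *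
          (∏ i ∈ Icc 1 m, ∏ j ∈ Icc 1 m,
            9 * ((m : ℝ) + (j : ℝ) - (i : ℝ)) * ((m : ℝ) + (j : ℝ) + (i : ℝ)))) := by
  have hC := det_odd_hilbert m
  have hN := prod_three_mul_sub_mul_prod_add m
  have hT := prod_Icc_prod_Ico_split m fun i j => (j : ℝ) ^ 2 - (i : ℝ) ^ 2
  have hT0 : ∏ j ∈ Icc 1 (2 * m), ∏ i ∈ Ico 1 j, ((j : ℝ) ^ 2 - (i : ℝ) ^ 2) ≠ 0 := by
    refine prod_ne_zero_iff.2 fun j _ => prod_ne_zero_iff.2 fun i hi => ?_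
    have h : (i : ℝ) < j := by exact_mod_cast (mem_Ico.1 hi).2
    have : (i : ℝ) ^ 2 < (j : ℝ) ^ 2 := by gcongr
    linarith
  have hS0 : ∏ j ∈ Icc 1 (2 * m), ∏ i ∈ Ico 1 j, ((j : ℝ) + i) ≠ 0 := by
    refine prod_ne_zero_iff.2 fun j hj => prod_ne_zero_iff.2 fun i _ => ?_
    have : (1 : ℝ) ≤ j := by exact_mod_cast (mem_Icc.1 hj).1
    positivity
  have hQ : ∏ i ∈ Icc 1 (2 * m + 1), ∏ j ∈ Icc 1 m, (1 + 3 * (2 * (j : ℝ) - (i : ℝ))) =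
      9 ^ m ^ 2 * 3 ^ m *
        ∏ i ∈ Icc 1 (2 * m + 1), ∏ j ∈ Icc 1 m, (1 / 3 + (2 * (j : ℝ) - (i : ℝ))) := by
    have h3 : (9 : ℝ) ^ m ^ 2 * 3 ^ m = ∏ _i ∈ Icc 1 (2 * m + 1), ∏ _j ∈ Icc 1 m, (3 : ℝ) := by
      simp only [prod_const, Nat.card_Icc, Nat.add_sub_cancel, ← pow_mul]
      rw [show (9 : ℝ) = 3 ^ 2 by norm_num, ← pow_mul, ← pow_add]
      congr 1
      ring
    rw [h3, ← prod_mul_distrib]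
    refine prod_congr rfl fun i _ => ?_
    rw [← prod_mul_distrib]
    exact prod_congr rfl fun j _ => by ring
  have hA : ∏ i ∈ Icc 1 m, ∏ j ∈ Icc 1 m,
      9 * ((m : ℝ) + (j : ℝ) - (i : ℝ)) * ((m : ℝ) + (j : ℝ) + (i : ℝ)) =
      9 ^ m ^ 2 * ∏ i ∈ Icc 1 m, ∏ j ∈ Icc 1 m, (((m + j : ℕ) : ℝ) ^ 2 - (i : ℝ) ^ 2) := by
    have h9 : (9 : ℝ) ^ m ^ 2 = ∏ _i ∈ Icc 1 m, ∏ _j ∈ Icc 1 m, (9 : ℝ) := by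
      simp only [prod_const, Nat.card_Icc, Nat.add_sub_cancel, ← pow_mul, sq]
    rw [h9, ← prod_mul_distrib]
    refine prod_congr rfl fun i _ => ?_
    rw [← prod_mul_distrib]
    refine prod_congr rfl fun j _ => ?_
    push_cast
    ring
  have hF0 : ∏ i ∈ range m, ((2 * i + 1).factorial : ℝ) ≠ 0 :=
    prod_ne_zero_iff.2 fun i _ => by positivity
  rw [det_gCoeff_eq_mul_det_sinhQuotHankel, eval_det_sinhQuotHankel, hQ, hA]
  rw [mul_left_comm _ ((9 : ℝ) ^ m ^ 2), mul_assoc ((2 * m).factorial : ℝ),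
    mul_assoc ((2 * m).factorial : ℝ), ← hT, div_pow]
  have hf : ((2 * m).factorial : ℝ) ≠ 0 := by positivity
  set N := ∏ j ∈ Icc 1 (2 * m), ∏ i ∈ Ico 1 j, 3 * ((j : ℝ) - (i : ℝ))
  set S := ∏ j ∈ Icc 1 (2 * m), ∏ i ∈ Ico 1 j, ((j : ℝ) + i)
  set T := ∏ j ∈ Icc 1 (2 * m), ∏ i ∈ Ico 1 j, ((j : ℝ) ^ 2 - (i : ℝ) ^ 2)
  set F := ∏ i ∈ range m, ((2 * i + 1).factorial : ℝ)
  set f := ((2 * m).factorial : ℝ)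
  set D := (Matrix.of fun i j : Fin m => (2 * (i : ℝ) + 2 * j + 3)⁻¹).det
  have hD' : D = 4 ^ m ^ 2 * F ^ 2 / (2 ^ m * f * S) := by
    rw [eq_div_iff (by positivity), ← hC]
    ring
  have hN' : N = 9 ^ m ^ 2 * T / (S * 3 ^ m) := by
    rw [eq_div_iff (by positivity), ← hN]
    ring
  rw [hD', hN']
  field_simp

/-- Taylor coefficients of `sinh (u / 3) / sinh u` in the variable `u ^ 2`. -/
noncomputable def sinhThirdCoeff (n : ℕ) : ℝ :=
  (sinhQuotPoly n).eval (1 / 3) / (2 * n).factorial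

lemma sum_sinhThirdCoeff_div_factorial (n : ℕ) :
    ∑ k ∈ range (n + 1), sinhThirdCoeff k / (2 * (n - k) + 1).factorial =
      (1 / 3) ^ (2 * n + 1) / (2 * n + 1).factorial := by
  rw [← sum_choose_mul_eval_sinhQuotPoly, sum_div]
  refine sum_congr rfl fun k hk => ?_
  have hk : k ≤ n := by simpa [Nat.lt_succ_iff] using hk
  rw [sinhThirdCoeff, Nat.cast_choose ℝ (by omega : 2 * k ≤ 2 * n + 1),
    show 2 * n + 1 - 2 * k = 2 * (n - k) + 1 by omega]
  field_simp

lemma sum_inv_factorial_le_one (n : ℕ) :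
    ∑ j ∈ range n, (1 : ℝ) / (2 * (j + 1) + 1).factorial + 1 / (2 * n + 1).factorial ≤ 1 := by
  induction n with
  | zero => simp
  | succ n ih =>
    have h : (2 : ℝ) / (2 * (n + 1) + 1).factorial ≤ 1 / (2 * n + 1).factorial := by
      rw [show 2 * (n + 1) + 1 = 2 * n + 1 + 1 + 1 by ring, Nat.factorial_succ, Nat.factorial_succ]
      push_cast
      rw [div_le_div_iff₀ (by positivity) (by positivity)]
      have h1 : (0 : ℝ) < (2 * n + 1).factorial := by positivity
      have h2 : (0 : ℝ) ≤ n := by positivity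
      nlinarith [mul_nonneg h2 h1.le, mul_nonneg (mul_nonneg h2 h2) h1.le]
    rw [sum_range_succ]
    have h3 : (2 : ℝ) / (2 * (n + 1) + 1).factorial =
      1 / (2 * (n + 1) + 1).factorial + 1 / (2 * (n + 1) + 1).factorial := by ring
    linarith

lemma abs_sinhThirdCoeff_le_one (n : ℕ) : |sinhThirdCoeff n| ≤ 1 := by
  induction n using Nat.strong_induction_on with
  | _ n ih =>
    have h := sum_sinhThirdCoeff_div_factorial n
    rw [sum_range_succ] at h
    simp only [Nat.sub_self, mul_zero, zero_add, Nat.factorial_one, Nat.cast_one, div_one] at h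
    have h1 : |∑ k ∈ range n, sinhThirdCoeff k / (2 * (n - k) + 1).factorial| ≤
        ∑ j ∈ range n, (1 : ℝ) / (2 * (j + 1) + 1).factorial := by
      rw [← sum_range_reflect (fun j => (1 : ℝ) / (2 * (j + 1) + 1).factorial)]
      refine (abs_sum_le_sum_abs _ _).trans (sum_le_sum fun k hk => ?_)
      have hk := mem_range.1 hk
      rw [abs_div, Nat.abs_cast, show n - 1 - k + 1 = n - k by omega]
      gcongr
      exact ih k hk
    have h2 : |(1 / 3 : ℝ) ^ (2 * n + 1) / (2 * n + 1).factorial| ≤ 1 / (2 * n + 1).factorial := by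
      rw [abs_of_nonneg (by positivity)]
      gcongr
      exact pow_le_one₀ (by norm_num) (by norm_num)
    have h3 := sum_inv_factorial_le_one n
    rw [abs_le] at *
    constructor <;> linarith

lemma summable_sinhThirdCoeff_mul_pow {u : ℝ} (hu : |u| < 1) :
    Summable fun n => sinhThirdCoeff n * u ^ (2 * n) := by
  refine Summable.of_norm_bounded
    (summable_geometric_of_lt_one (sq_nonneg u) ((sq_lt_one_iff_abs_lt_one u).2 hu)) fun n => ?_
  rw [norm_mul, Real.norm_eq_abs, pow_mul, norm_pow, Real.norm_of_nonneg (sq_nonneg u)]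
  exact mul_le_of_le_one_left (by positivity) (abs_sinhThirdCoeff_le_one n)

lemma tsum_sinhThirdCoeff_mul_sinh {u : ℝ} (hu : |u| < 1) :
    (∑' n, sinhThirdCoeff n * u ^ (2 * n)) * Real.sinh u = Real.sinh (u / 3) := by
  rw [← (Real.hasSum_sinh u).tsum_eq, tsum_mul_tsum_eq_tsum_sum_range_of_summable_norm
    (summable_sinhThirdCoeff_mul_pow hu).norm (Real.hasSum_sinh u).summable.norm,
    ← (Real.hasSum_sinh (u / 3)).tsum_eq]
  refine tsum_congr fun n => ?_
  have h : (u / 3) ^ (2 * n + 1) / (2 * n + 1).factorial =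
      u ^ (2 * n + 1) * ((1 / 3) ^ (2 * n + 1) / (2 * n + 1).factorial) := by
    rw [div_eq_mul_one_div u 3, mul_pow, mul_div_assoc]
  rw [h, ← sum_sinhThirdCoeff_div_factorial, mul_sum]
  refine sum_congr rfl fun k hk => ?_
  have hk : k ≤ n := by simpa [Nat.lt_succ_iff] using hk
  rw [show 2 * n + 1 = 2 * k + (2 * (n - k) + 1) by omega, pow_add]
  ring

lemma tsum_sinhThirdCoeff_zero : ∑' n, sinhThirdCoeff n * (0 : ℝ) ^ (2 * n) = 1 / 3 := by
  rw [tsum_eq_single 0 fun n hn => by simp [hn]]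
  simpa using sum_sinhThirdCoeff_div_factorial 0

lemma gKer_eq_tsum_sub_tsum {x y : ℝ} (hx : 0 < x) (hy : 0 < y) (hx' : x < 1 / 3)
    (hy' : y < 1 / 3) :
    gKer x y = ∑' n, sinhThirdCoeff n * (3 / 2 * (x + y)) ^ (2 * n) -
      ∑' n, sinhThirdCoeff n * (3 / 2 * (x - y)) ^ (2 * n) := by
  have key {u : ℝ} (hu : |u| < 1) (hu0 : u ≠ 0) :
      ∑' n, sinhThirdCoeff n * u ^ (2 * n) = Real.sinh (u / 3) / Real.sinh u := by
    rw [eq_div_iff (Real.sinh_eq_zero.not.2 hu0), tsum_sinhThirdCoeff_mul_sinh hu]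
  have h1 := key (u := 3 / 2 * (x + y)) (by rw [abs_lt]; constructor <;> linarith) (by positivity)
  rw [gKer, h1]
  split_ifs with hxy
  · subst hxy
    rw [sub_self, mul_zero, tsum_sinhThirdCoeff_zero]
    ring_nf
  · rw [key (u := 3 / 2 * (x - y)) (by rw [abs_lt]; constructor <;> linarith)
      (mul_ne_zero (by norm_num) (sub_ne_zero.2 hxy))]
    ring_nf

lemma gCoeff_eq (i j : ℕ) :
    gCoeff i j = 2 * (3 / 2) ^ (2 * (i + j + 1)) * sinhThirdCoeff (i + j + 1) *
      (2 * (i + j + 1)).choose (2 * i + 1) := by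
  rw [Nat.cast_choose ℝ (by omega), gCoeff, sinhThirdCoeff,
    show 2 * (i + j + 1) - (2 * i + 1) = 2 * j + 1 by omega]
  field_simp

lemma abs_gCoeff_le (i j : ℕ) : |gCoeff i j| ≤ 18 * 9 ^ i * 9 ^ j := by
  have hch : (((2 * (i + j + 1)).choose (2 * i + 1) : ℕ) : ℝ) ≤ 4 ^ (i + j + 1) := by
    have := Nat.choose_le_two_pow (2 * (i + j + 1)) (2 * i + 1)
    rw [pow_mul] at this
    exact_mod_cast this
  rw [gCoeff_eq, abs_mul, abs_mul, Nat.abs_cast, abs_of_nonneg (by positivity), pow_mul]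
  calc _ ≤ 2 * ((3 / 2 : ℝ) ^ 2) ^ (i + j + 1) * 1 * 4 ^ (i + j + 1) := by
        gcongr
        exact abs_sinhThirdCoeff_le_one _
    _ = 2 * ((3 / 2 : ℝ) ^ 2 * 4) ^ (i + j + 1) := by rw [mul_pow]; ring
    _ = _ := by norm_num; ring

lemma add_pow_sub_sub_pow (x y : ℝ) (n : ℕ) :
    (x + y) ^ (2 * (n + 1)) - (x - y) ^ (2 * (n + 1)) =
      ∑ p ∈ antidiagonal n, 2 * ((2 * (n + 1)).choose (2 * p.1 + 1) : ℝ) *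
        x ^ (2 * p.1 + 1) * y ^ (2 * p.2 + 1) := by
  rw [sub_eq_add_neg x y, add_pow, add_pow, ← sum_sub_distrib, sum_range_succ, sum_range_two_mul,
    Nat.sum_antidiagonal_eq_sum_range_succ
      (fun i j => 2 * ((2 * (n + 1)).choose (2 * i + 1) : ℝ) * x ^ (2 * i + 1) * y ^ (2 * j + 1))]
  simp only [Nat.sub_self, pow_zero, sub_self, add_zero]
  refine sum_congr rfl fun k hk => ?_
  have hk : k ≤ n := by simpa [Nat.lt_succ_iff] using hk
  rw [show 2 * (n + 1) - 2 * k = 2 * (n + 1 - k) by omega,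
    show 2 * (n + 1) - (2 * k + 1) = 2 * (n - k) + 1 by omega, Even.neg_pow ⟨_, two_mul _⟩,
    Odd.neg_pow ⟨_, rfl⟩]
  ring

lemma summable_abs_gCoeff_mul_pow {c d r : ℝ} (hc : 0 ≤ c) (hd : 0 ≤ d) (hr0 : 0 ≤ r)
    (hr : r < 1 / 9) :
    Summable fun q : ℕ × ℕ => |gCoeff q.1 q.2| * (c * r ^ q.1) * (d * r ^ q.2) := by
  have hg : Summable fun n : ℕ => (9 * r) ^ n :=
    summable_geometric_of_lt_one (by positivity) (by linarith)
  refine Summable.of_nonneg_of_le (fun q => by positivity) (fun q => ?_)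
    ((hg.mul_of_nonneg hg (fun n => by positivity) fun n => by positivity).mul_left (18 * c * d))
  calc _ ≤ 18 * 9 ^ q.1 * 9 ^ q.2 * (c * r ^ q.1) * (d * r ^ q.2) := by
        gcongr
        exact abs_gCoeff_le _ _
    _ = _ := by simp only [mul_pow]; ring

lemma norm_gCoeff_mul_mul_le {u v : ℕ → ℝ} {c d r : ℝ} (hu : ∀ n, |u n| ≤ c * r ^ n)
    (hv : ∀ n, |v n| ≤ d * r ^ n) (q : ℕ × ℕ) :
    ‖gCoeff q.1 q.2 * u q.1 * v q.2‖ ≤ |gCoeff q.1 q.2| * (c * r ^ q.1) * (d * r ^ q.2) := by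
  rw [norm_mul, norm_mul, Real.norm_eq_abs, Real.norm_eq_abs, Real.norm_eq_abs]
  have h1 := (abs_nonneg _).trans (hu q.1)
  gcongr
  · exact hu _
  · exact hv _

/-- The double power series of `gKer x y / (x * y)` in `x ^ 2` and `y ^ 2`. -/
lemma hasSum_gKer {x y : ℝ} (hx : 0 < x) (hy : 0 < y) (hx' : x ≤ 1 / 10) (hy' : y ≤ 1 / 10) :
    HasSum (fun q : ℕ × ℕ => gCoeff q.1 q.2 * (x ^ 2) ^ q.1 * (y ^ 2) ^ q.2)
      (gKer x y / (x * y)) := by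
  have hpow {z : ℝ} (hz : 0 < z) (hz' : z ≤ 1 / 10) (n : ℕ) :
      |(z ^ 2) ^ n| ≤ 1 * (1 / 100) ^ n := by
    rw [abs_of_nonneg (by positivity), one_mul]
    gcongr
    nlinarith
  have hsum : Summable fun q : ℕ × ℕ => gCoeff q.1 q.2 * (x ^ 2) ^ q.1 * (y ^ 2) ^ q.2 :=
    Summable.of_norm_bounded
      (summable_abs_gCoeff_mul_pow zero_le_one zero_le_one (by norm_num) (by norm_num))
      (norm_gCoeff_mul_mul_le (hpow hx hx') (hpow hy hy'))
  have hu1 : |3 / 2 * (x + y)| < 1 := by rw [abs_lt]; constructor <;> linarith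
  have hu2 : |3 / 2 * (x - y)| < 1 := by rw [abs_lt]; constructor <;> linarith
  have hdiff := ((summable_sinhThirdCoeff_mul_pow hu1).hasSum.sub
    (summable_sinhThirdCoeff_mul_pow hu2).hasSum)
  rw [← gKer_eq_tsum_sub_tsum hx hy (by linarith) (by linarith), ← hasSum_nat_add_iff' 1] at hdiff
  simp only [range_one, sum_singleton, mul_zero, pow_zero, sub_self, sub_zero] at hdiff
  have hanti := (((Finset.HasAntidiagonal.sigmaAntidiagonalEquivProd (A := ℕ)).hasSum_iff.2
    hsum.hasSum).sigma fun n => hasSum_fintype _).mul_left (x * y)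
  have hterm (n : ℕ) : x * y * ∑ p : antidiagonal n, gCoeff p.1.1 p.1.2 * (x ^ 2) ^ p.1.1 *
      (y ^ 2) ^ p.1.2 = sinhThirdCoeff (n + 1) * (3 / 2 * (x + y)) ^ (2 * (n + 1)) -
        sinhThirdCoeff (n + 1) * (3 / 2 * (x - y)) ^ (2 * (n + 1)) := by
    rw [← mul_sub, mul_pow, mul_pow, ← mul_sub, add_pow_sub_sub_pow, mul_sum, mul_sum, mul_sum,
      sum_coe_sort (antidiagonal n)
        (fun p => x * y * (gCoeff p.1 p.2 * (x ^ 2) ^ p.1 * (y ^ 2) ^ p.2))]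
    refine sum_congr rfl fun p hp => ?_
    obtain rfl := mem_antidiagonal.1 hp
    rw [gCoeff_eq, ← pow_mul, ← pow_mul]
    ring
  have hxy : gKer x y = x * y * ∑' q : ℕ × ℕ, gCoeff q.1 q.2 * (x ^ 2) ^ q.1 * (y ^ 2) ^ q.2 :=
    hdiff.unique (by simp only [← hterm]; exact hanti)
  rw [hxy, mul_div_cancel_left₀ _ (by positivity)]
  exact hsum.hasSum

/-- Coefficients of `z ^ n` in the Newton basis `∏ l < j, (z - s l)`. -/
noncomputable def newtonCoeff (s : ℕ → ℝ) : ℕ → ℕ → ℝ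
  | 0, 0 => 1
  | 0, _ + 1 => 0
  | n + 1, 0 => s 0 * newtonCoeff s n 0
  | n + 1, j + 1 => newtonCoeff s n j + s (j + 1) * newtonCoeff s n (j + 1)

lemma pow_eq_sum_newtonCoeff (s : ℕ → ℝ) {i m : ℕ} (hi : i < m) (n : ℕ) :
    s i ^ n = ∑ j ∈ range m, newtonCoeff s n j * ∏ l ∈ range j, (s i - s l) := by
  obtain ⟨m, rfl⟩ : ∃ k, m = k + 1 := ⟨m - 1, by omega⟩
  induction n with
  | zero => simp [sum_range_succ', newtonCoeff]
  | succ n ih =>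
    have hlast : ∏ l ∈ range (m + 1), (s i - s l) = 0 :=
      prod_eq_zero (mem_range.2 hi) (sub_self _)
    have hshift : ∑ j ∈ range (m + 1), newtonCoeff s n j * ∏ l ∈ range (j + 1), (s i - s l) =
        ∑ j ∈ range m, newtonCoeff s n j * ∏ l ∈ range (j + 1), (s i - s l) := by
      rw [sum_range_succ, hlast, mul_zero, add_zero]
    have hmul : s i ^ (n + 1) =
        ∑ j ∈ range (m + 1), newtonCoeff s n j * ∏ l ∈ range (j + 1), (s i - s l) +
        ∑ j ∈ range (m + 1), s j * newtonCoeff s n j * ∏ l ∈ range j, (s i - s l) := by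
      rw [pow_succ, ih, sum_mul, ← sum_add_distrib]
      refine sum_congr rfl fun j _ => ?_
      rw [prod_range_succ]
      ring
    rw [hmul, hshift, sum_range_succ', sum_range_succ', ← add_assoc, ← sum_add_distrib]
    simp only [newtonCoeff, add_mul]

lemma abs_newtonCoeff_le {s : ℕ → ℝ} (hs : ∀ j, |s j| ≤ 1 / 100) (n j : ℕ) :
    |newtonCoeff s n j| ≤ 100 ^ j * (1 / 50) ^ n := by
  induction n generalizing j with
  | zero =>
    cases j with
    | zero => simp [newtonCoeff]
    | succ j => simp only [newtonCoeff, abs_zero]; positivity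
  | succ n ih =>
    have hmul (j : ℕ) : |s j * newtonCoeff s n j| ≤ 1 / 100 * (100 ^ j * (1 / 50) ^ n) := by
      rw [abs_mul]
      exact mul_le_mul (hs j) (ih j) (abs_nonneg _) (by norm_num)
    cases j with
    | zero =>
      have h := hmul 0
      have hp : (0 : ℝ) ≤ (1 / 50) ^ n := by positivity
      rw [newtonCoeff, pow_succ]
      linarith
    | succ j =>
      have h := (abs_add_le _ _).trans (add_le_add (ih j) (hmul (j + 1)))
      rw [newtonCoeff]
      refine h.trans (le_of_eq ?_)
      ring

lemma newtonCoeff_zero (n j : ℕ) : newtonCoeff 0 n j = if n = j then 1 else 0 := by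
  induction n generalizing j with
  | zero => cases j <;> simp [newtonCoeff]
  | succ n ih => cases j <;> simp [newtonCoeff, ih]

lemma continuous_newtonCoeff (n j : ℕ) : Continuous fun s => newtonCoeff s n j := by
  induction n generalizing j with
  | zero => cases j <;> exact continuous_const
  | succ n ih =>
    cases j with
    | zero => exact (continuous_apply 0).mul (ih 0)
    | succ j => exact (ih j).add ((continuous_apply (j + 1)).mul (ih (j + 1)))

/-- The kernel `∑ gCoeff a b * z ^ a * w ^ b` expanded in the Newton bases of the nodes `s`
and `t`. -/
noncomputable def newtonKernel (s t : ℕ → ℝ) (j k : ℕ) : ℝ :=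
  ∑' q : ℕ × ℕ, gCoeff q.1 q.2 * newtonCoeff s q.1 j * newtonCoeff t q.2 k

lemma summable_newtonKernel {s t : ℕ → ℝ} (hs : ∀ j, |s j| ≤ 1 / 100)
    (ht : ∀ j, |t j| ≤ 1 / 100) (j k : ℕ) :
    Summable fun q : ℕ × ℕ => gCoeff q.1 q.2 * newtonCoeff s q.1 j * newtonCoeff t q.2 k :=
  Summable.of_norm_bounded
    (summable_abs_gCoeff_mul_pow (by positivity) (by positivity) (by norm_num) (by norm_num))
    (norm_gCoeff_mul_mul_le (u := (newtonCoeff s · j)) (v := (newtonCoeff t · k))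
      (abs_newtonCoeff_le hs · j) (abs_newtonCoeff_le ht · k))

lemma newtonKernel_zero (j k : ℕ) : newtonKernel 0 0 j k = gCoeff j k := by
  rw [newtonKernel, tsum_eq_single (j, k)]
  · simp [newtonCoeff_zero]
  · rintro ⟨a, b⟩ h
    simp only [newtonCoeff_zero]
    by_cases ha : a = j
    · have hb : b ≠ k := fun hb => h (by rw [ha, hb])
      simp [hb]
    · simp [ha]

lemma tendsto_newtonKernel {α : Type*} {l : Filter α} {s t : α → ℕ → ℝ}
    (hs : Tendsto s l (nhds 0)) (ht : Tendsto t l (nhds 0))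
    (hs' : ∀ᶠ a in l, ∀ j, |s a j| ≤ 1 / 100) (ht' : ∀ᶠ a in l, ∀ j, |t a j| ≤ 1 / 100)
    (j k : ℕ) : Tendsto (fun a => newtonKernel (s a) (t a) j k) l (nhds (gCoeff j k)) := by
  rw [← newtonKernel_zero]
  refine tendsto_tsum_of_dominated_convergence
    (summable_abs_gCoeff_mul_pow (c := 100 ^ j) (d := 100 ^ k) (r := 1 / 50)
      (by positivity) (by positivity) (by norm_num) (by norm_num)) (fun q => ?_) ?_
  · exact (((continuous_newtonCoeff q.1 j).tendsto 0).comp hs).const_mul _ |>.mul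
      (((continuous_newtonCoeff q.2 k).tendsto 0).comp ht)
  · filter_upwards [hs', ht'] with a hsa hta
    exact norm_gCoeff_mul_mul_le (u := (newtonCoeff (s a) · j)) (v := (newtonCoeff (t a) · k))
      (abs_newtonCoeff_le hsa · j) (abs_newtonCoeff_le hta · k)

/-- The squares of the entries of a vector, extended by zero. -/
noncomputable def sqExtend {m : ℕ} (x : Fin m → ℝ) (j : ℕ) : ℝ :=
  if h : j < m then x ⟨j, h⟩ ^ 2 else 0

lemma sqExtend_val {m : ℕ} (x : Fin m → ℝ) (i : Fin m) : sqExtend x i = x i ^ 2 := by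
  simp [sqExtend]

lemma sqExtend_zero {m : ℕ} : sqExtend (0 : Fin m → ℝ) = 0 := by
  ext j
  simp [sqExtend]

lemma continuous_sqExtend {m : ℕ} : Continuous (sqExtend (m := m)) := by
  refine continuous_pi fun j => ?_
  unfold sqExtend
  split_ifs with h
  · fun_prop
  · exact continuous_const

lemma abs_sqExtend_le {m : ℕ} {x : Fin m → ℝ} (hx : ∀ i, |x i| ≤ 1 / 10) (j : ℕ) :
    |sqExtend x j| ≤ 1 / 100 := by
  unfold sqExtend
  split_ifs with h
  · have h1 := hx ⟨j, h⟩
    have h2 := abs_nonneg (x ⟨j, h⟩)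
    rw [abs_pow]
    nlinarith
  · norm_num

/-- Values of the Newton basis at its own nodes. -/
noncomputable def newtonMatrix (m : ℕ) (s : ℕ → ℝ) : Matrix (Fin m) (Fin m) ℝ :=
  Matrix.of fun i j => ∏ l ∈ range j, (s i - s l)

lemma det_newtonMatrix_sqExtend {m : ℕ} (x : Fin m → ℝ) :
    (newtonMatrix m (sqExtend x)).det =
      ∏ j : Fin m, ∏ i ∈ univ.filter (fun i : Fin m => i < j), (x j ^ 2 - x i ^ 2) := by
  rw [Matrix.det_of_isLowerTriangular]
  · refine prod_congr rfl fun j _ => ?_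
    rw [newtonMatrix, Matrix.of_apply]
    symm
    refine prod_bij (fun i _ => (i : ℕ)) (fun i hi => by simpa using hi)
      (fun i _ i' _ h => Fin.ext h)
      (fun l hl => ⟨⟨l, (mem_range.1 hl).trans j.2⟩,
        mem_filter.2 ⟨mem_univ _, mem_range.1 hl⟩, rfl⟩)
      (fun i _ => by rw [sqExtend_val, sqExtend_val])
  · intro i j hij
    have hij : (i : ℕ) < j := hij
    exact prod_eq_zero (mem_range.2 hij) (sub_self _)

lemma gKer_eq_newton {m : ℕ} {x y : Fin m → ℝ} (hx : ∀ i, 0 < x i) (hy : ∀ i, 0 < y i)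
    (hx' : ∀ i, |x i| ≤ 1 / 10) (hy' : ∀ i, |y i| ≤ 1 / 10) (i k : Fin m) :
    gKer (x i) (y k) = x i * (y k * (newtonMatrix m (sqExtend x) *
      (Matrix.of fun a b : Fin m => newtonKernel (sqExtend x) (sqExtend y) a b) *
      (newtonMatrix m (sqExtend y)).transpose) i k) := by
  have h1 := hasSum_gKer (hx i) (hy k) (le_of_abs_le (hx' i)) (le_of_abs_le (hy' k))
  have h2 : HasSum (fun q : ℕ × ℕ => gCoeff q.1 q.2 * (x i ^ 2) ^ q.1 * (y k ^ 2) ^ q.2)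
      ((newtonMatrix m (sqExtend x) *
        (Matrix.of fun a b : Fin m => newtonKernel (sqExtend x) (sqExtend y) a b) *
        (newtonMatrix m (sqExtend y)).transpose) i k) := by
    simp only [Matrix.mul_apply, sum_mul, Matrix.of_apply, Matrix.transpose_apply]
    have h3 := hasSum_sum (s := univ) fun (b : Fin m) _ => hasSum_sum (s := univ)
      fun (a : Fin m) _ => (((summable_newtonKernel (abs_sqExtend_le hx') (abs_sqExtend_le hy')
        a b).hasSum.mul_left (newtonMatrix m (sqExtend x) i a)).mul_right
          (newtonMatrix m (sqExtend y) k b))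
    have hfun : (fun q : ℕ × ℕ => gCoeff q.1 q.2 * (x i ^ 2) ^ q.1 * (y k ^ 2) ^ q.2) = fun q =>
        ∑ b : Fin m, ∑ a : Fin m, newtonMatrix m (sqExtend x) i a *
          (gCoeff q.1 q.2 * newtonCoeff (sqExtend x) q.1 a * newtonCoeff (sqExtend y) q.2 b) *
          newtonMatrix m (sqExtend y) k b := by
      funext q
      rw [← sqExtend_val, ← sqExtend_val, pow_eq_sum_newtonCoeff (sqExtend x) i.2,
        pow_eq_sum_newtonCoeff (sqExtend y) k.2, mul_sum]
      simp only [newtonMatrix, Matrix.of_apply, sum_range, mul_sum, sum_mul]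
      refine sum_congr rfl fun b _ => sum_congr rfl fun a _ => ?_
      ring
    rw [hfun]
    exact h3
  have h3 := h1.unique h2
  have := hx i
  have := hy k
  rw [← h3]
  field_simp

lemma det_gKer_eq {m : ℕ} {x y : Fin m → ℝ} (hx : ∀ i, 0 < x i) (hy : ∀ i, 0 < y i)
    (hx' : ∀ i, |x i| ≤ 1 / 10) (hy' : ∀ i, |y i| ≤ 1 / 10) :
    (Matrix.of fun i k : Fin m => gKer (x i) (y k)).det =
      (∏ k, x k * y k) * (∏ j : Fin m, ∏ i ∈ univ.filter (fun i : Fin m => i < j),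
        (x j ^ 2 - x i ^ 2) * (y j ^ 2 - y i ^ 2)) *
      (Matrix.of fun a b : Fin m => newtonKernel (sqExtend x) (sqExtend y) a b).det := by
  simp only [gKer_eq_newton hx hy hx' hy', prod_mul_distrib]
  refine (Matrix.det_mul_column x (Matrix.of fun i k => y k * _)).trans ?_
  rw [Matrix.det_mul_row, Matrix.det_mul, Matrix.det_mul,
    Matrix.det_transpose, det_newtonMatrix_sqExtend, det_newtonMatrix_sqExtend]
  ring

/-- Two-family homogeneous limit: for `m ≥ 1`, the ratio
`det_m[g(x_j,y_k)] / (∏_k x_k y_k · ∏_{i<j} (x_j²−x_i²)(y_j²−y_i²))`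
tends, as `(x,y) → (0,0)` within the domain `0 < x_1 < … < x_m`, `0 < y_1 < … < y_m`,
to the explicit constant `L_m`. -/
theorem det_g_two_family_homogeneous_limit (m : ℕ) (hm : 1 ≤ m) :
    Tendsto
      (fun p : (Fin m → ℝ) × (Fin m → ℝ) =>
        Matrix.det (Matrix.of fun j k : Fin m => gKer (p.1 j) (p.2 k)) /
          ((∏ k : Fin m, p.1 k * p.2 k) *
            ∏ j : Fin m, ∏ i ∈ Finset.univ.filter (fun i : Fin m => i < j),
              ((p.1 j) ^ 2 - (p.1 i) ^ 2) * ((p.2 j) ^ 2 - (p.2 i) ^ 2)))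
      (nhdsWithin (0, 0)
        {p : (Fin m → ℝ) × (Fin m → ℝ) |
          StrictMono p.1 ∧ StrictMono p.2 ∧ ∀ i, 0 < p.1 i ∧ 0 < p.2 i})
      (nhds
        ((∏ j ∈ Icc 1 (2 * m), ∏ i ∈ Ico 1 j, 3 * ((j : ℝ) - (i : ℝ))) *
         (∏ i ∈ Icc 1 (2 * m + 1), ∏ j ∈ Icc 1 m, (1 + 3 * (2 * (j : ℝ) - (i : ℝ)))) /
         (((2 * m).factorial : ℝ) *
          (∏ j ∈ Icc 1 m, ∏ i ∈ Ico 1 j, ((j : ℝ) ^ 2 - (i : ℝ) ^ 2)) *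
          (∏ j ∈ Icc (m + 1) (2 * m), ∏ i ∈ Ico (m + 1) j, ((j : ℝ) ^ 2 - (i : ℝ) ^ 2)) *
          (∏ i ∈ Icc 1 m, ∏ j ∈ Icc 1 m,
            9 * ((m : ℝ) + (j : ℝ) - (i : ℝ)) * ((m : ℝ) + (j : ℝ) + (i : ℝ)))))) := by
  have hcont {l : Filter ((Fin m → ℝ) × (Fin m → ℝ))} {f : (Fin m → ℝ) × (Fin m → ℝ) → Fin m → ℝ}
      (hf : Tendsto f l (nhds 0)) : Tendsto (fun p => sqExtend (f p)) l (nhds 0) := by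
    rw [← sqExtend_zero (m := m)]
    exact (continuous_sqExtend.tendsto 0).comp hf
  have hsmall {l : Filter ((Fin m → ℝ) × (Fin m → ℝ))} {f : (Fin m → ℝ) × (Fin m → ℝ) → Fin m → ℝ}
      (hf : Tendsto f l (nhds 0)) : ∀ᶠ p in l, ∀ i, |f p i| ≤ 1 / 10 := by
    filter_upwards [hf.eventually (Metric.closedBall_mem_nhds 0 (by norm_num : (0 : ℝ) < 1 / 10))]
      with p hp i
    exact (norm_le_pi_norm (f p) i).trans (mem_closedBall_zero_iff.1 hp)
  have hfst : Tendsto Prod.fst (nhdsWithin ((0, 0) : (Fin m → ℝ) × (Fin m → ℝ))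
      {p | StrictMono p.1 ∧ StrictMono p.2 ∧ ∀ i, 0 < p.1 i ∧ 0 < p.2 i}) (nhds 0) :=
    (continuous_fst.tendsto _).mono_left nhdsWithin_le_nhds
  have hsnd : Tendsto Prod.snd (nhdsWithin ((0, 0) : (Fin m → ℝ) × (Fin m → ℝ))
      {p | StrictMono p.1 ∧ StrictMono p.2 ∧ ∀ i, 0 < p.1 i ∧ 0 < p.2 i}) (nhds 0) :=
    (continuous_snd.tendsto _).mono_left nhdsWithin_le_nhds
  rw [← det_gCoeff]
  have hdet := (((continuous_id (X := Matrix (Fin m) (Fin m) ℝ)).matrix_det.tendsto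
    (Matrix.of fun i j : Fin m => gCoeff i j)).comp (tendsto_pi_nhds.2 fun j =>
      tendsto_pi_nhds.2 fun k => tendsto_newtonKernel (hcont hfst) (hcont hsnd)
        ((hsmall hfst).mono fun p hp => abs_sqExtend_le hp)
        ((hsmall hsnd).mono fun p hp => abs_sqExtend_le hp) (j : ℕ) (k : ℕ)))
  refine hdet.congr' ?_
  filter_upwards [hsmall hfst, hsmall hsnd, self_mem_nhdsWithin] with p hp1 hp2 hp
  obtain ⟨hm1, hm2, hpos⟩ := hp
  have hsq {x : Fin m → ℝ} (hx : StrictMono x) (hx0 : ∀ i, 0 < x i) {i j : Fin m} (hij : i < j) :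
      x j ^ 2 - x i ^ 2 ≠ 0 :=
    (sub_pos.2 (pow_lt_pow_left₀ (hx hij) (hx0 i).le two_ne_zero)).ne'
  rw [det_gKer_eq (fun i => (hpos i).1) (fun i => (hpos i).2) hp1 hp2, mul_div_cancel_left₀]
  · rfl
  · refine mul_ne_zero (prod_ne_zero_iff.2 fun k _ => (mul_pos (hpos k).1 (hpos k).2).ne')
      (prod_ne_zero_iff.2 fun j _ => prod_ne_zero_iff.2 fun i hi => ?_)
    have hij : i < j := (mem_filter.1 hi).2
    exact mul_ne_zero (hsq hm1 (fun i => (hpos i).1) hij) (hsq hm2 (fun i => (hpos i).2) hij)
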